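/- arXiv:2604.26101 — 2 statements merged into one kernel-verified Lean document; each statement's English description precedes it below -/
import Mathlib

section
/- Let G be a 2-regular digraph on a finite vertex type V with n elements, and let λ(G) = |{v ∈ V : G v v}| be the number of loops of G. Then 4·∑_{σ ∈ C(G)} c(σ) ≤ (2n + λ(G))·|C(G)| ≤ 3n·|C(G)|; that is, the expected number of cycles of a uniformly random cycle-factor of G is at most n/2 + λ(G)/4 ≤ 3n/4. -/
/-!
A cycle of length at least two uses at least two vertices, so a permutation `σ` of an `n`-element
type with `f` fixed points satisfies `2 c(σ) ≤ n + f` (`two_mul_cycleCount_le`). It remains to see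
that a loop at `v` lies in at most half of the cycle-factors (`two_mul_card_fix_le`). In a
2-regular digraph the edges not used by a cycle-factor `σ` form a cycle-factor again
(`exists_complement`); this complementation is injective, and it sends the cycle-factors fixing
`v` to cycle-factors that do not. Summing over the loops gives
`4 ∑ c(σ) ≤ 2n |C(G)| + 2 ∑ f(σ) ≤ (2n + λ(G)) |C(G)|`.
-/

/-- The number of cycles of a permutation of a finite type, where fixed
points count as cycles of length one. -/
def cycleCount {V : Type*} [Fintype V] [DecidableEq V] (σ : Equiv.Perm V) : ℕ :=
  σ.cycleType.card + (Finset.univ.filter fun x => σ x = x).card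

/-- The finite set of cycle-factors of a digraph `G` on `V`. -/
def cycleFactors {V : Type*} [Fintype V] [DecidableEq V] (G : V → V → Prop) [DecidableRel G] :
    Finset (Equiv.Perm V) :=
  Finset.univ.filter fun σ => ∀ v, G v (σ v)

/-- A digraph is `d`-regular if every vertex has exactly `d` out-neighbours
and exactly `d` in-neighbours. -/
def IsRegularDigraph {V : Type*} [Fintype V] (G : V → V → Prop) [DecidableRel G] (d : ℕ) : Prop :=
  ∀ v, (Finset.univ.filter fun w => G v w).card = d ∧
    (Finset.univ.filter fun w => G w v).card = d

theorem two_mul_cycleCount_le {V : Type*} [Fintype V] [DecidableEq V] (σ : Equiv.Perm V) :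
    2 * cycleCount σ ≤ Fintype.card V + (Finset.univ.filter fun x => σ x = x).card := by
  have h1 : σ.cycleType.card * 2 ≤ σ.support.card := by
    rw [← Equiv.Perm.sum_cycleType]
    exact Multiset.card_nsmul_le_sum fun x hx => Equiv.Perm.two_le_of_mem_cycleType hx
  have h2 : (Finset.univ.filter fun x => σ x = x).card + σ.support.card = Fintype.card V := by
    have := Finset.card_filter_add_card_filter_not (s := (Finset.univ : Finset V))
      (fun x => σ x = x)
    simpa [Equiv.Perm.support] using this
  unfold cycleCount
  omega

/-- In a finite set with two elements, two elements that both differ from a third coincide. -/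
theorem eq_of_card_two {α : Type*} [DecidableEq α] {s : Finset α} (hs : s.card = 2) {a b c : α}
    (ha : a ∈ s) (hb : b ∈ s) (hc : c ∈ s) (hac : a ≠ c) (hbc : b ≠ c) : a = b := by
  by_contra hab
  have h : ({a, b, c} : Finset α) ⊆ s := by
    intro x
    simp only [Finset.mem_insert, Finset.mem_singleton]
    rintro (rfl | rfl | rfl) <;> assumption
  have h3 := Finset.card_le_card h
  rw [Finset.card_eq_three.2 ⟨a, b, c, hab, hac, hbc, rfl⟩] at h3
  omega

/-- The edges of a 2-regular digraph outside a cycle-factor form a cycle-factor. -/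
theorem exists_complement {V : Type*} [Fintype V] [DecidableEq V] {G : V → V → Prop}
    [DecidableRel G] (hreg : IsRegularDigraph G 2) (σ : Equiv.Perm V) (hσ : σ ∈ cycleFactors G) :
    ∃ τ ∈ cycleFactors G, ∀ v, τ v ≠ σ v := by
  have hG : ∀ v, G v (σ v) := by simpa [cycleFactors] using hσ
  have hex : ∀ v, ∃ w, G v w ∧ w ≠ σ v := fun v => by
    obtain ⟨w, hw, hne⟩ := Finset.exists_mem_ne (by rw [(hreg v).1]; norm_num) (σ v)
    exact ⟨w, by simpa using hw, hne⟩
  choose f hf hne using hex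
  have hinj : Function.Injective f := by
    intro a b hab
    -- The in-neighbours of `f a` are `σ⁻¹ (f a)` and one further vertex.
    refine eq_of_card_two (c := σ.symm (f a)) (hreg (f a)).2 ?_ ?_ ?_ ?_ ?_
    · simpa using hf a
    · simpa [hab] using hf b
    · simpa using hG (σ.symm (f a))
    · intro h
      exact hne a (by conv_rhs => rw [h, Equiv.apply_symm_apply])
    · intro h
      exact hne b (by rw [← hab]; conv_rhs => rw [h, Equiv.apply_symm_apply])
  refine ⟨Equiv.ofBijective f (Finite.injective_iff_bijective.1 hinj), ?_, hne⟩
  simpa [cycleFactors] using hf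

/-- Complementation maps the cycle-factors fixing `v` injectively to those moving `v`. -/
theorem two_mul_card_fix_le {V : Type*} [Fintype V] [DecidableEq V] {G : V → V → Prop}
    [DecidableRel G] (hreg : IsRegularDigraph G 2) (v : V) :
    2 * ((cycleFactors G).filter fun σ => σ v = v).card ≤ (cycleFactors G).card := by
  choose! τ hτ hne using exists_complement hreg
  have h := Finset.card_filter_add_card_filter_not (s := cycleFactors G) (fun σ => σ v = v)
  have hle : ((cycleFactors G).filter fun σ => σ v = v).card ≤
      ((cycleFactors G).filter fun σ => ¬ σ v = v).card := by
    refine Finset.card_le_card_of_injOn τ ?_ ?_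
    · intro σ hσ
      simp only [Finset.coe_filter, Set.mem_setOf_eq] at hσ ⊢
      refine ⟨hτ σ hσ.1, fun h => hne σ hσ.1 v ?_⟩
      rw [h, hσ.2]
    · intro σ hσ ρ hρ hστ
      simp only [Finset.coe_filter, Set.mem_setOf_eq] at hσ hρ
      have edge : ∀ π ∈ cycleFactors G, ∀ x, G x (π x) := fun π hπ => by
        simpa [cycleFactors] using hπ
      ext x
      refine eq_of_card_two (c := τ σ x) (hreg x).1 ?_ ?_ ?_ (hne σ hσ.1 x).symm ?_
      · simpa using edge σ hσ.1 x
      · simpa using edge ρ hρ.1 x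
      · simpa using edge _ (hτ σ hσ.1) x
      · rw [hστ]
        exact (hne ρ hρ.1 x).symm
  omega

theorem stmt_3 {V : Type*} [Fintype V] [DecidableEq V] (G : V → V → Prop) [DecidableRel G]
    (hreg : IsRegularDigraph G 2) :
    4 * ∑ σ ∈ cycleFactors G, cycleCount σ ≤
        (2 * Fintype.card V + (Finset.univ.filter fun v => G v v).card) * (cycleFactors G).card ∧
      (2 * Fintype.card V + (Finset.univ.filter fun v => G v v).card) * (cycleFactors G).card ≤
        3 * Fintype.card V * (cycleFactors G).card := by
  constructor
  · have hsum : 2 * ∑ σ ∈ cycleFactors G, cycleCount σ ≤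
        (cycleFactors G).card * Fintype.card V +
          ∑ σ ∈ cycleFactors G, (Finset.univ.filter fun x => σ x = x).card := by
      rw [Finset.mul_sum, ← smul_eq_mul, ← Finset.sum_const, ← Finset.sum_add_distrib]
      exact Finset.sum_le_sum fun σ _ => two_mul_cycleCount_le σ
    -- Double counting of the pairs `(σ, x)` with `σ x = x`; only loops `x` contribute.
    have hswap : ∑ σ ∈ cycleFactors G, (Finset.univ.filter fun x => σ x = x).card =
        ∑ x : V, ((cycleFactors G).filter fun σ => σ x = x).card := by
      simp only [Finset.card_filter]
      exact Finset.sum_comm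
    have hfix : 2 * ∑ x : V, ((cycleFactors G).filter fun σ => σ x = x).card ≤
        (Finset.univ.filter fun v => G v v).card * (cycleFactors G).card := by
      rw [Finset.mul_sum, ← smul_eq_mul, ← Finset.sum_const, Finset.sum_filter]
      refine Finset.sum_le_sum fun x _ => ?_
      split_ifs with hx
      · exact two_mul_card_fix_le hreg x
      · have : ((cycleFactors G).filter fun σ => σ x = x) = ∅ := by
          refine Finset.filter_eq_empty_iff.2 fun σ hσ h => hx ?_
          have := (Finset.mem_filter.1 hσ).2 x
          rwa [h] at this
        simp [this]
    rw [hswap] at hsum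
    nlinarith
  · have h : (Finset.univ.filter fun v => G v v).card ≤ Fintype.card V := Finset.card_le_univ _
    exact Nat.mul_le_mul_right _ (by omega)
end

section
/- Let m ≥ 1, let V be a finite type with m elements, and let x ∈ V. Then the number of permutations π of V with π x ≠ x equals m! − (m − 1)!, and ∑_{π : π x ≠ x} c(π) = (m − 1)!·(m − 1)·H_{m−1} as rational numbers; consequently, the average number of cycles of a uniformly random permutation of V conditioned on not fixing x equals H_{m−1}. -/
/-- The harmonic number `H m = ∑_{j=1}^m 1/j`. -/
def harm (m : ℕ) : ℚ := ∑ j ∈ Finset.range m, (1 : ℚ) / (j + 1)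

open Equiv Equiv.Perm

/-- A function invariant under `σ` is constant on the cycles of `σ`. -/
lemma apply_eq_of_sameCycle {V β : Type*} {σ : Perm V} {F : V → β}
    (hF : ∀ v, F (σ v) = F v) {v w : V} (h : σ.SameCycle v w) : F v = F w := by
  obtain ⟨i, rfl⟩ := h
  induction i using Int.induction_on with
  | zero => simp
  | succ i ih => rw [add_comm, zpow_add, zpow_one, mul_apply, hF, ih]
  | pred i ih =>
    rw [ih, ← hF ((σ ^ (-(i : ℤ) - 1)) v), ← mul_apply, ← zpow_one_add]
    congr 3
    ring

/-- The number of cycles is the number of classes of the relation `SameCycle`: a nontrivial class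
corresponds to a cycle factor, a trivial one to a fixed point. -/
lemma cycleCount_eq_card_quotient {V : Type*} [Fintype V] [DecidableEq V] (σ : Perm V) :
    cycleCount σ = Nat.card (Quotient (SameCycle.setoid σ)) := by
  let F : V → σ.cycleFactorsFinset ⊕ {v // σ v = v} := fun v =>
    if h : σ v = v then Sum.inr ⟨v, h⟩ else
      Sum.inl ⟨σ.cycleOf v, cycleOf_mem_cycleFactorsFinset_iff.2 (mem_support.2 h)⟩
  have hF : ∀ v w, F v = F w ↔ σ.SameCycle v w := by
    intro v w
    by_cases hv : σ v = v <;> by_cases hw : σ w = w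
    · simp only [F, hv, hw, dite_true, Sum.inr.injEq, Subtype.mk.injEq]
      exact ⟨fun h => h ▸ SameCycle.refl _ _, fun h => h.eq_of_left hv⟩
    · simp only [F, hv, hw, dite_true, dite_false, reduceCtorEq, false_iff]
      exact fun h => hw (h.apply_eq_self_iff.1 hv)
    · simp only [F, hv, hw, dite_true, dite_false, reduceCtorEq, false_iff]
      exact fun h => hv (h.apply_eq_self_iff.2 hw)
    · simp only [F, hv, hw, dite_false, Sum.inl.injEq, Subtype.mk.injEq]
      exact (sameCycle_iff_cycleOf_eq_of_mem_support
        (mem_support.2 hv) (mem_support.2 hw)).symm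
  have hs : Function.Surjective F := by
    rintro (⟨c, hc⟩ | ⟨v, hv⟩)
    · obtain ⟨v, hv⟩ := (mem_cycleFactorsFinset_iff.1 hc).1.nonempty_support
      have h1 : c = σ.cycleOf v := cycle_is_cycleOf hv hc
      have h2 : σ v ≠ v := mem_support.1 (mem_cycleFactorsFinset_support_le hc hv)
      exact ⟨v, by simp [F, h2, h1]⟩
    · exact ⟨v, by simp [F, hv]⟩
  have hb : Function.Bijective
      (Quotient.lift F (fun v w h => (hF v w).2 h) : Quotient (SameCycle.setoid σ) → _) := by
    refine ⟨?_, fun b => ?_⟩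
    · rintro ⟨v⟩ ⟨w⟩ h
      exact Quotient.sound ((hF v w).1 h)
    · obtain ⟨v, rfl⟩ := hs b
      exact ⟨Quotient.mk _ v, rfl⟩
  rw [Nat.card_eq_of_bijective _ hb, Nat.card_eq_fintype_card, Fintype.card_sum,
    Fintype.card_coe, Fintype.card_subtype, cycleCount, cycleType_def]
  simp

lemma cycleCount_eq_card {V β : Type*} [Fintype V] [DecidableEq V] (σ : Perm V) (F : V → β)
    (hs : Function.Surjective F) (hF : ∀ v, F (σ v) = F v)
    (hF' : ∀ v w, F v = F w → σ.SameCycle v w) : cycleCount σ = Nat.card β := by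
  rw [cycleCount_eq_card_quotient]
  refine Nat.card_eq_of_bijective
    (Quotient.lift F (fun v w h => apply_eq_of_sameCycle hF h)) ⟨?_, fun b => ?_⟩
  · rintro ⟨v⟩ ⟨w⟩ h
    exact Quotient.sound (hF' v w h)
  · obtain ⟨v, rfl⟩ := hs b
    exact ⟨Quotient.mk _ v, rfl⟩

lemma cycleCount_permCongr {V W : Type*} [Fintype V] [DecidableEq V] [Fintype W] [DecidableEq W]
    (e : V ≃ W) (σ : Perm V) : cycleCount (e.permCongr σ) = cycleCount σ := by
  rw [cycleCount_eq_card_quotient (e.permCongr σ)]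
  symm
  let s := SameCycle.setoid (e.permCongr σ)
  refine cycleCount_eq_card σ (fun v => Quotient.mk s (e v)) ?_ ?_ ?_
  · rintro ⟨w⟩
    exact ⟨e.symm w, by simp; rfl⟩
  · intro v
    refine Quotient.sound (SameCycle.symm ⟨1, ?_⟩)
    simp
  · intro v w h
    have h' : (e.permCongr σ).SameCycle (e v) (e w) := Quotient.exact h
    have := apply_eq_of_sameCycle (σ := e.permCongr σ)
      (F := fun u => Quotient.mk (SameCycle.setoid σ) (e.symm u))
      (fun u => Quotient.sound (SameCycle.symm ⟨1, by simp⟩)) h'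
    have h2 : σ.SameCycle (e.symm (e v)) (e.symm (e w)) := Quotient.exact this
    simpa using h2

lemma cycleCount_optionCongr {α : Type*} [Fintype α] [DecidableEq α] (σ : Perm α) :
    cycleCount (optionCongr σ) = cycleCount σ + 1 := by
  rw [cycleCount_eq_card_quotient σ]
  let s := SameCycle.setoid σ
  rw [cycleCount_eq_card (optionCongr σ) (Option.map (Quotient.mk s)), Finite.card_option]
  · rintro (_ | ⟨⟨v⟩⟩)
    · exact ⟨none, rfl⟩
    · exact ⟨some v, rfl⟩
  · rintro (_ | v)
    · rfl
    · exact congrArg some (Quotient.sound (SameCycle.symm ⟨1, by simp⟩))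
  · rintro (_ | v) (_ | w) h
    · exact SameCycle.refl _ _
    · simp at h
    · simp at h
    · have h' : σ.SameCycle v w := Quotient.exact (Option.some.inj h)
      have := apply_eq_of_sameCycle (σ := σ)
        (F := fun u => Quotient.mk (SameCycle.setoid (optionCongr σ)) (some u))
        (fun u => Quotient.sound (SameCycle.symm ⟨1, by simp⟩)) h'
      exact Quotient.exact this

/-- Inserting `none` into the cycle of `a` does not change the number of cycles: collapsing `none`
to `a` maps the cycles of the new permutation bijectively to those of `σ`. -/
lemma cycleCount_swap_mul_optionCongr {α : Type*} [Fintype α] [DecidableEq α] (σ : Perm α)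
    (a : α) : cycleCount (swap none (some a) * optionCongr σ) = cycleCount σ := by
  rw [cycleCount_eq_card_quotient σ]
  set π := swap none (some a) * optionCongr σ with hπ
  let s := SameCycle.setoid σ
  have hnone : π none = some a := by simp [hπ]
  have hsome : ∀ v, σ v ≠ a → π (some v) = some (σ v) := fun v hv => by
    simp [hπ, swap_apply_of_ne_of_ne, hv]
  have hsome' : ∀ v, σ v = a → π (some v) = none := fun v hv => by simp [hπ, hv]
  have hstep : ∀ v, π.SameCycle (some v) (some (σ v)) := by
    intro v
    by_cases hv : σ v = a
    · exact ⟨2, by rw [zpow_two, mul_apply, hsome' v hv, hnone, hv]⟩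
    · exact ⟨1, by rw [zpow_one, hsome v hv]⟩
  have hcol : ∀ u : Option α, π.SameCycle u (some (u.getD a)) := by
    rintro (_ | v)
    · exact ⟨1, by rw [zpow_one, hnone]; rfl⟩
    · exact SameCycle.refl _ _
  refine cycleCount_eq_card π (fun u => Quotient.mk s (u.getD a)) ?_ ?_ ?_
  · rintro ⟨v⟩
    exact ⟨some v, rfl⟩
  · rintro (_ | v)
    · rw [hnone]; rfl
    · refine Quotient.sound (SameCycle.symm ⟨1, ?_⟩)
      by_cases hv : σ v = a
      · simp [hsome' v hv, hv]
      · simp [hsome v hv]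
  · intro v w h
    have h' : σ.SameCycle (v.getD a) (w.getD a) := Quotient.exact h
    have := apply_eq_of_sameCycle (σ := σ)
      (F := fun u => Quotient.mk (SameCycle.setoid π) (some u))
      (fun u => Quotient.sound (hstep u).symm) h'
    exact (hcol v).trans ((Quotient.exact this : π.SameCycle _ _).trans (hcol w).symm)

lemma sum_cycleCount_fin (n : ℕ) :
    ∑ σ : Perm (Fin n), (cycleCount σ : ℚ) = (n.factorial : ℚ) * harm n := by
  induction n with
  | zero => simp [harm, cycleCount]
  | succ n ih =>
    have h1 : ∑ σ : Perm (Fin (n + 1)), (cycleCount σ : ℚ) =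
        ∑ p : Option (Fin n) × Perm (Fin n), (cycleCount (decomposeOption.symm p) : ℚ) :=
      Fintype.sum_equiv ((finSuccEquiv n).permCongr.trans decomposeOption) _ _ fun σ => by
        rw [Equiv.trans_apply, Equiv.symm_apply_apply, cycleCount_permCongr]
    rw [h1, Fintype.sum_prod_type, Fintype.sum_option]
    simp only [decomposeOption_symm_apply, cycleCount_swap_mul_optionCongr, swap_self,
      ← Perm.one_def, one_mul, cycleCount_optionCongr]
    push_cast
    rw [Finset.sum_add_distrib, ih]
    simp only [Finset.sum_const, Finset.card_univ, Fintype.card_perm, Fintype.card_fin,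
      nsmul_eq_mul, harm, Finset.sum_range_succ, Nat.factorial_succ]
    push_cast
    field_simp
    ring

lemma sum_cycleCount {α : Type*} [Fintype α] [DecidableEq α] {n : ℕ} (h : Fintype.card α = n) :
    ∑ σ : Perm α, (cycleCount σ : ℚ) = (n.factorial : ℚ) * harm n := by
  rw [← sum_cycleCount_fin]
  exact Fintype.sum_equiv (Fintype.equivFinOfCardEq h).permCongr _ _ fun σ => by
    rw [cycleCount_permCongr]

/-- In the coordinates `(π x, σ)`, where `σ` permutes `V \ {x}`, a function of `σ` alone takes each
of its values once for every choice of `π x ≠ x`. -/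
lemma sum_moving {V : Type*} [Fintype V] [DecidableEq V] (x : V) (f : Perm V → ℚ)
    (g : Perm {y // y ≠ x} → ℚ)
    (hfg : ∀ a σ, f ((optionSubtypeNe x).permCongr (decomposeOption.symm (some a, σ))) = g σ) :
    ∑ π ∈ Finset.univ.filter fun π : Perm V => π x ≠ x, f π =
      (Fintype.card {y // y ≠ x} : ℚ) * ∑ σ, g σ := by
  rw [Finset.sum_filter, ← Equiv.sum_comp (decomposeOption.symm.trans (optionSubtypeNe x).permCongr),
    Fintype.sum_prod_type, Fintype.sum_option]
  simp only [Equiv.trans_apply, hfg]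
  have h0 : ∀ (i : Option {y // y ≠ x}) (σ : Perm {y // y ≠ x}),
      (optionSubtypeNe x).permCongr (decomposeOption.symm (i, σ)) x = optionSubtypeNe x i := by
    intro i σ
    simp [Equiv.permCongr_apply]
  simp only [h0]
  have h1 : ∀ a : {y // y ≠ x}, (a : V) ≠ x := fun a => a.2
  simp [h1]

theorem stmt_11 {V : Type*} [Fintype V] [DecidableEq V] (m : ℕ) (hm : 1 ≤ m)
    (hV : Fintype.card V = m) (x : V) :
    (Finset.univ.filter fun π : Equiv.Perm V => π x ≠ x).card =
        Nat.factorial m - Nat.factorial (m - 1) ∧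
      ∑ π ∈ Finset.univ.filter fun π : Equiv.Perm V => π x ≠ x, (cycleCount π : ℚ) =
        (Nat.factorial (m - 1) : ℚ) * ((m : ℚ) - 1) * harm (m - 1) ∧
      (∑ π ∈ Finset.univ.filter fun π : Equiv.Perm V => π x ≠ x, (cycleCount π : ℚ)) /
          (((Finset.univ.filter fun π : Equiv.Perm V => π x ≠ x).card : ℚ)) =
        harm (m - 1) := by
  obtain ⟨n, rfl⟩ : ∃ n, m = n + 1 := ⟨m - 1, by omega⟩
  have hc : Fintype.card {y // y ≠ x} = n := by
    simp [Fintype.card_subtype_compl, hV]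
  have hcard : ((Finset.univ.filter fun π : Perm V => π x ≠ x).card : ℚ) = n * n.factorial := by
    have := sum_moving x (fun _ => 1) (fun _ => 1) (fun _ _ => rfl)
    rw [hc] at this
    simpa [Fintype.card_perm, hc, hV] using this
  have hsum : ∑ π ∈ Finset.univ.filter fun π : Perm V => π x ≠ x, (cycleCount π : ℚ) =
      n * (n.factorial * harm n) := by
    rw [sum_moving x (fun π => (cycleCount π : ℚ)) (fun σ => (cycleCount σ : ℚ)), hc,
      sum_cycleCount hc]
    intro a σ
    rw [cycleCount_permCongr, decomposeOption_symm_apply, cycleCount_swap_mul_optionCongr]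
  simp only [Nat.add_sub_cancel]
  refine ⟨?_, ?_, ?_⟩
  · have h : (Finset.univ.filter fun π : Perm V => π x ≠ x).card = n * n.factorial := by
      exact_mod_cast hcard
    rw [h, Nat.factorial_succ, Nat.succ_mul, Nat.add_sub_cancel]
  · rw [hsum]
    push_cast
    ring
  · rw [hsum, hcard]
    -- For `n = 0` no permutation moves `x`, and both sides are `0`.
    rcases Nat.eq_zero_or_pos n with rfl | hn
    · simp [harm]
    · have h1 : (n : ℚ) ≠ 0 := by positivity
      have h2 : (n.factorial : ℚ) ≠ 0 := by positivity
      field_simp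
end
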